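/- Let G be a UD exchange network with weights w_e ∈ (0,1] for all e∈E, let (γ^0, M) be a stable trade outcome, let κ ∈ (0,1/2], and let ε > 0. Consider the Edge Rebalancing iteration γ^{t+1} := κ γ^reb(γ^t) + (1−κ) γ^t. Then there exists t ≤ ⌈1/(π κ(1−κ) ε²)⌉ such that ‖γ^reb(γ^t) − γ^t‖_∞ ≤ ε; at such t, the outcome (γ^t, M) satisfies ε-correct division, i.e., |γ^t_i − max_{k∈∂i∖j}(w_{ik}−γ^t_k)_+ − r_{ij}·Surp_{ij}(γ^t)| ≤ ε for all (i,j)∈M. -/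

import Mathlib

namespace EN

open Finset

variable {V : Type*}

/-- The nonnegative part `(x)₊ = max (x, 0)`. -/
noncomputable def pos (x : ℝ) : ℝ := max x 0

variable [Fintype V] [DecidableEq V]

/-- The maximum of `f` over a finite set of vertices (`0` over the empty set). -/
noncomputable def fmax (s : Finset V) (f : V → ℝ) : ℝ := ⨆ k ∈ s, f k

/-- The offer from `i` to `j` given messages `α` and weights `w`:
`m_{i→j} = (w_{ij} − α_{i\j})₊ − (1/2) (w_{ij} − α_{i\j} − α_{j\i})₊`. -/
noncomputable def offer (w α : V → V → ℝ) (i j : V) : ℝ :=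
  pos (w i j - α i j) - (1 / 2) * pos (w i j - α i j - α j i)

/-- The update operator `T` of the natural dynamics:
`(Tα)_{i\j} = max_{k ∈ ∂i \ j} m_{k→i}`. -/
noncomputable def upd (G : SimpleGraph V) [DecidableRel G.Adj] (w α : V → V → ℝ)
    (i j : V) : ℝ :=
  fmax ((G.neighborFinset i).erase j) fun k => offer w α k i

/-- The earnings estimate `γ_i = max_{k ∈ ∂i} m_{k→i}`. -/
noncomputable def earn (G : SimpleGraph V) [DecidableRel G.Adj] (w α : V → V → ℝ)
    (i : V) : ℝ :=
  fmax (G.neighborFinset i) fun k => offer w α k i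

/-- Exchange network weights: symmetric and positive on every edge. -/
def GoodW (G : SimpleGraph V) (w : V → V → ℝ) : Prop :=
  (∀ i j, w i j = w j i) ∧ ∀ i j, G.Adj i j → 0 < w i j

/-- A valid message vector: nonnegative on all directed edges. -/
def ValidMsg (G : SimpleGraph V) (α : V → V → ℝ) : Prop :=
  ∀ i j, G.Adj i j → 0 ≤ α i j

/-- Fixed point of the natural-dynamics update operator. -/
def IsFixedPt (G : SimpleGraph V) [DecidableRel G.Adj] (w α : V → V → ℝ) : Prop :=
  ∀ i j, G.Adj i j → upd G w α i j = α i j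

/-- `ε`-fixed point. -/
def IsEpsFixedPt (G : SimpleGraph V) [DecidableRel G.Adj] (w α : V → V → ℝ) (ε : ℝ) : Prop :=
  ∀ i j, G.Adj i j → |α i j - upd G w α i j| ≤ ε

/-- The natural dynamics with damping factor `κ`: `α^{t+1} = (1−κ) α^t + κ T α^t`. -/
noncomputable def dyn (G : SimpleGraph V) [DecidableRel G.Adj] (w : V → V → ℝ) (κ : ℝ)
    (α0 : V → V → ℝ) : ℕ → V → V → ℝ
  | 0 => α0
  | t + 1 => fun i j =>
      (1 - κ) * dyn G w κ α0 t i j + κ * upd G w (dyn G w κ α0 t) i j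

/-- Sup norm over directed edges. -/
noncomputable def msgSup (G : SimpleGraph V) [DecidableRel G.Adj] (f : V → V → ℝ) : ℝ :=
  ⨆ p : V × V, if G.Adj p.1 p.2 then |f p.1 p.2| else 0

/-- `M` is a matching of `G`: a symmetric subrelation of adjacency pairing each node
with at most one partner. -/
structure IsMatching (G : SimpleGraph V) (M : V → V → Prop) : Prop where
  subset : ∀ i j, M i j → G.Adj i j
  symm : ∀ i j, M i j → M j i
  unique : ∀ i j k, M i j → M i k → j = k

/-- `(M, γ)` is a trade outcome. -/
def IsOutcome (G : SimpleGraph V) (w : V → V → ℝ) (M : V → V → Prop) (γ : V → ℝ) : Prop :=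
  IsMatching G M ∧ (∀ i, 0 ≤ γ i) ∧ (∀ i j, M i j → γ i + γ j = w i j) ∧
    ∀ i, (∀ j, ¬M i j) → γ i = 0

/-- Stability of an outcome. -/
def Stable (G : SimpleGraph V) (w : V → V → ℝ) (M : V → V → Prop) (γ : V → ℝ) : Prop :=
  ∀ i j, G.Adj i j → ¬M i j → w i j ≤ γ i + γ j

/-- The best alternative of `i` excluding `j`: `max_{k ∈ ∂i \ j} (w_{ik} − γ_k)₊`. -/
noncomputable def bestAlt (G : SimpleGraph V) [DecidableRel G.Adj] (w : V → V → ℝ)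
    (γ : V → ℝ) (i j : V) : ℝ :=
  fmax ((G.neighborFinset i).erase j) fun k => pos (w i k - γ k)

/-- Balance of an outcome. -/
def Balanced (G : SimpleGraph V) [DecidableRel G.Adj] (w : V → V → ℝ) (M : V → V → Prop)
    (γ : V → ℝ) : Prop :=
  ∀ i j, M i j → γ i - bestAlt G w γ i j = γ j - bestAlt G w γ j i

/-- Nash bargaining solution: a stable and balanced trade outcome. -/
def IsNBSolution (G : SimpleGraph V) [DecidableRel G.Adj] (w : V → V → ℝ)
    (M : V → V → Prop) (γ : V → ℝ) : Prop :=
  IsOutcome G w M γ ∧ Stable G w M γ ∧ Balanced G w M γ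

/-- `ε`-balance. -/
def EpsBalanced (G : SimpleGraph V) [DecidableRel G.Adj] (w : V → V → ℝ)
    (M : V → V → Prop) (γ : V → ℝ) (ε : ℝ) : Prop :=
  ∀ i j, M i j → |(γ i - bestAlt G w γ i j) - (γ j - bestAlt G w γ j i)| ≤ ε

/-- `ε`-Nash bargaining solution. -/
def IsEpsNB (G : SimpleGraph V) [DecidableRel G.Adj] (w : V → V → ℝ)
    (M : V → V → Prop) (γ : V → ℝ) (ε : ℝ) : Prop :=
  IsOutcome G w M γ ∧ Stable G w M γ ∧ EpsBalanced G w M γ ε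

/-- Feasible point of the LP relaxation of maximum weight matching. -/
def LPFeasible (G : SimpleGraph V) [DecidableRel G.Adj] (x : V → V → ℝ) : Prop :=
  (∀ i j, x i j = x j i) ∧ (∀ i j, 0 ≤ x i j) ∧ (∀ i j, ¬G.Adj i j → x i j = 0) ∧
    ∀ i, ∑ j ∈ G.neighborFinset i, x i j ≤ 1

/-- LP objective `Σ_{(i,j)∈E} w_{ij} x_{ij}` (each undirected edge counted once). -/
noncomputable def LPval (G : SimpleGraph V) [DecidableRel G.Adj] (w x : V → V → ℝ) : ℝ :=
  (1 / 2) * ∑ i, ∑ j ∈ G.neighborFinset i, w i j * x i j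

/-- Optimal point of the LP relaxation of maximum weight matching. -/
def LPOptimal (G : SimpleGraph V) [DecidableRel G.Adj] (w x : V → V → ℝ) : Prop :=
  LPFeasible G x ∧ ∀ y, LPFeasible G y → LPval G w y ≤ LPval G w x

def Integral (x : V → V → ℝ) : Prop := ∀ i j, x i j = 0 ∨ x i j = 1

def HalfIntegral (x : V → V → ℝ) : Prop := ∀ i j, x i j = 0 ∨ x i j = 1 / 2 ∨ x i j = 1

open Classical in
/-- The LP point associated to a matching. -/
noncomputable def mInd (M : V → V → Prop) (i j : V) : ℝ := if M i j then 1 else 0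

/-- The state with offers `m` induces the matching `M`: every node receiving a positive
offer is matched and receives its unique best offer from its partner, and every node
with zero earnings is unmatched. -/
def Induces (G : SimpleGraph V) [DecidableRel G.Adj] (m : V → V → ℝ)
    (M : V → V → Prop) : Prop :=
  IsMatching G M ∧
    (∀ i, (∃ k, G.Adj i k ∧ 0 < m k i) →
      ∃ j, M i j ∧ ∀ k, G.Adj i k → k ≠ j → m k i < m j i) ∧
    ∀ i, (fmax (G.neighborFinset i) fun k => m k i) = 0 → ∀ j, ¬M i j

/-- Feasibility for the dual LP. -/
def DualFeasible (G : SimpleGraph V) (w : V → V → ℝ) (y : V → ℝ) : Prop :=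
  (∀ i, 0 ≤ y i) ∧ ∀ i j, G.Adj i j → w i j ≤ y i + y j

/-- Optimality for the dual LP. -/
def DualOptimal (G : SimpleGraph V) (w : V → V → ℝ) (y : V → ℝ) : Prop :=
  DualFeasible G w y ∧ ∀ z, DualFeasible G w z → ∑ i, y i ≤ ∑ i, z i

/-- The unmatched balance property at every edge. -/
def UnmatchedBalance (G : SimpleGraph V) [DecidableRel G.Adj] (w : V → V → ℝ)
    (y : V → ℝ) : Prop :=
  ∀ i j, G.Adj i j → y i - bestAlt G w y i j = y j - bestAlt G w y j i

/-! ### Unequal division -/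

/-- Valid split fractions: `r_{ij} ∈ (0,1)` with `r_{ij} + r_{ji} = 1` on every edge. -/
def GoodR (G : SimpleGraph V) (r : V → V → ℝ) : Prop :=
  ∀ i j, G.Adj i j → 0 < r i j ∧ r i j < 1 ∧ r i j + r j i = 1

/-- The UD offer from `i` to `j`. -/
noncomputable def offerUD (w r α : V → V → ℝ) (i j : V) : ℝ :=
  pos (w i j - α i j) - r i j * pos (w i j - α i j - α j i)

/-- The UD update operator. -/
noncomputable def updUD (G : SimpleGraph V) [DecidableRel G.Adj] (w r α : V → V → ℝ)
    (i j : V) : ℝ :=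
  fmax ((G.neighborFinset i).erase j) fun k => offerUD w r α k i

/-- The UD earnings estimate. -/
noncomputable def earnUD (G : SimpleGraph V) [DecidableRel G.Adj] (w r α : V → V → ℝ)
    (i : V) : ℝ :=
  fmax (G.neighborFinset i) fun k => offerUD w r α k i

/-- Fixed point of the UD update operator. -/
def IsFixedPtUD (G : SimpleGraph V) [DecidableRel G.Adj] (w r α : V → V → ℝ) : Prop :=
  ∀ i j, G.Adj i j → updUD G w r α i j = α i j

/-- Correct division. -/
def CorrectDiv (G : SimpleGraph V) [DecidableRel G.Adj] (w r : V → V → ℝ)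
    (M : V → V → Prop) (γ : V → ℝ) : Prop :=
  ∀ i j, M i j →
    (1 / r i j) * (γ i - bestAlt G w γ i j) = (1 / r j i) * (γ j - bestAlt G w γ j i)

/-- UD solution: a stable trade outcome satisfying correct division. -/
def IsUDSolution (G : SimpleGraph V) [DecidableRel G.Adj] (w r : V → V → ℝ)
    (M : V → V → Prop) (γ : V → ℝ) : Prop :=
  IsOutcome G w M γ ∧ Stable G w M γ ∧ CorrectDiv G w r M γ

/-- Edge surplus. -/
noncomputable def surp (G : SimpleGraph V) [DecidableRel G.Adj] (w : V → V → ℝ)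
    (γ : V → ℝ) (i j : V) : ℝ :=
  w i j - bestAlt G w γ i j - bestAlt G w γ j i

open Classical in
/-- The rebalanced allocation `γ^reb`. -/
noncomputable def reb (G : SimpleGraph V) [DecidableRel G.Adj] (w r : V → V → ℝ)
    (M : V → V → Prop) (γ : V → ℝ) (i : V) : ℝ :=
  if h : ∃ j, M i j then
    bestAlt G w γ i h.choose + r i h.choose * surp G w γ i h.choose
  else 0

/-- The Edge Rebalancing iteration `γ^{t+1} = κ γ^reb(γ^t) + (1−κ) γ^t`. -/
noncomputable def rebIter (G : SimpleGraph V) [DecidableRel G.Adj] (w r : V → V → ℝ)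
    (M : V → V → Prop) (κ : ℝ) (γ0 : V → ℝ) : ℕ → V → ℝ
  | 0 => γ0
  | t + 1 => fun i =>
      κ * reb G w r M (rebIter G w r M κ γ0 t) i + (1 - κ) * rebIter G w r M κ γ0 t i

theorem fmax_eq (s : Finset V) (f : V → ℝ) :
    fmax s f = ⨆ k, (if k ∈ s then f k else 0) := by
  unfold fmax
  congr 1
  funext k
  by_cases h : k ∈ s
  · simp [h]
  · simp [h]

theorem le_fmax (s : Finset V) (f : V → ℝ) (k : V) (hk : k ∈ s) : f k ≤ fmax s f := by
  rw [fmax_eq]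
  have := le_ciSup (f := fun k => (if k ∈ s then f k else 0)) (Set.finite_range _).bddAbove k
  simpa [hk] using this

theorem fmax_le (s : Finset V) (f : V → ℝ) (c : ℝ) (hc : 0 ≤ c) (h : ∀ k ∈ s, f k ≤ c) :
    fmax s f ≤ c := by
  rw [fmax_eq]
  refine Real.iSup_le (fun k => ?_) hc
  split_ifs with hk
  · exact h k hk
  · exact hc

theorem fmax_nonneg (s : Finset V) (f : V → ℝ) (h : ∀ k, 0 ≤ f k) : 0 ≤ fmax s f := by
  rw [fmax_eq]
  refine Real.iSup_nonneg (fun k => ?_)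
  split_ifs with hk
  · exact h k
  · exact le_refl _

theorem bestAlt_nonneg (G : SimpleGraph V) [DecidableRel G.Adj] (w : V → V → ℝ)
    (γ : V → ℝ) (i j : V) : 0 ≤ bestAlt G w γ i j :=
  fmax_nonneg _ _ fun _ => le_max_right _ _

theorem le_bestAlt (G : SimpleGraph V) [DecidableRel G.Adj] (w : V → V → ℝ)
    (γ : V → ℝ) (i j k : V) (hk : G.Adj i k) (hkj : k ≠ j) :
    w i k - γ k ≤ bestAlt G w γ i j :=
  (le_max_left _ _).trans
    (le_fmax ((G.neighborFinset i).erase j) (fun k => pos (w i k - γ k)) k (by simp [hk, hkj]))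

theorem bestAlt_le_add (G : SimpleGraph V) [DecidableRel G.Adj] (w : V → V → ℝ)
    (γ γ' : V → ℝ) (i j : V) :
    bestAlt G w γ i j ≤ bestAlt G w γ' i j + ‖γ - γ'‖ := by
  have h0 := bestAlt_nonneg G w γ' i j
  have h1 := norm_nonneg (γ - γ')
  refine fmax_le _ _ _ (by linarith) fun k hk => ?_
  simp only [Finset.mem_erase, SimpleGraph.mem_neighborFinset] at hk
  have h2 := le_bestAlt G w γ' i j k hk.2 hk.1
  have h3 := norm_le_pi_norm (γ - γ') k
  rw [Real.norm_eq_abs, Pi.sub_apply] at h3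
  have := (abs_le.1 h3).1
  unfold pos
  exact max_le (by linarith) (by linarith)

theorem reb_eq (G : SimpleGraph V) [DecidableRel G.Adj] (w r : V → V → ℝ)
    (M : V → V → Prop) (hM : IsMatching G M) (γ : V → ℝ) (i j : V) (h : M i j) :
    reb G w r M γ i = bestAlt G w γ i j + r i j * surp G w γ i j := by
  have hex : ∃ j, M i j := ⟨j, h⟩
  have : hex.choose = j := hM.unique _ _ _ hex.choose_spec h
  unfold reb
  rw [dif_pos hex, this]

theorem reb_zero (G : SimpleGraph V) [DecidableRel G.Adj] (w r : V → V → ℝ)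
    (M : V → V → Prop) (γ : V → ℝ) (i : V) (h : ∀ j, ¬ M i j) :
    reb G w r M γ i = 0 := by
  unfold reb
  rw [dif_neg (by simpa using h)]

theorem reb_nonexp (G : SimpleGraph V) [DecidableRel G.Adj] (w r : V → V → ℝ)
    (hr : GoodR G r) (M : V → V → Prop) (hM : IsMatching G M) (γ γ' : V → ℝ) :
    ‖reb G w r M γ - reb G w r M γ'‖ ≤ ‖γ - γ'‖ := by
  refine (pi_norm_le_iff_of_nonneg (norm_nonneg _)).2 fun i => ?_
  rw [Real.norm_eq_abs, Pi.sub_apply]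
  by_cases h : ∃ j, M i j
  · obtain ⟨j, h⟩ := h
    rw [reb_eq G w r M hM γ i j h, reb_eq G w r M hM γ' i j h]
    obtain ⟨r0, r1, -⟩ := hr i j (hM.subset _ _ h)
    have a1 := bestAlt_le_add G w γ γ' i j
    have a2 := bestAlt_le_add G w γ' γ i j
    have b1 := bestAlt_le_add G w γ γ' j i
    have b2 := bestAlt_le_add G w γ' γ j i
    rw [norm_sub_rev] at a2 b2
    unfold surp
    rw [abs_le]
    constructor <;> nlinarith
  · push Not at h
    rw [reb_zero G w r M γ i h, reb_zero G w r M γ' i h]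
    simp

theorem bestAlt_le (G : SimpleGraph V) [DecidableRel G.Adj] (w : V → V → ℝ)
    (M : V → V → Prop) (γ : V → ℝ)
    (h0 : IsOutcome G w M γ ∧ Stable G w M γ) (i j : V) (h : M i j) :
    bestAlt G w γ i j ≤ γ i := by
  obtain ⟨⟨hM, hpos, hsum, hz⟩, hst⟩ := h0
  refine fmax_le _ _ _ (hpos i) fun k hk => ?_
  simp only [Finset.mem_erase, SimpleGraph.mem_neighborFinset] at hk
  have := hst i k hk.2 (fun h' => hk.1 (hM.unique _ _ _ h' h))
  unfold pos
  exact max_le (by linarith) (hpos i)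

theorem reb_ge (G : SimpleGraph V) [DecidableRel G.Adj] (w r : V → V → ℝ)
    (hw : GoodW G w) (hr : GoodR G r) (M : V → V → Prop) (γ : V → ℝ)
    (h0 : IsOutcome G w M γ ∧ Stable G w M γ) (i j : V) (h : M i j) :
    bestAlt G w γ i j ≤ reb G w r M γ i := by
  have hM := h0.1.1
  rw [reb_eq G w r M hM γ i j h]
  have a1 := bestAlt_le G w M γ h0 i j h
  have a2 := bestAlt_le G w M γ h0 j i (hM.symm _ _ h)
  have := h0.1.2.2.1 i j h
  have hs : 0 ≤ surp G w γ i j := by unfold surp; linarith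
  have := mul_nonneg (hr i j (hM.subset _ _ h)).1.le hs
  linarith

theorem reb_sum (G : SimpleGraph V) [DecidableRel G.Adj] (w r : V → V → ℝ)
    (hw : GoodW G w) (hr : GoodR G r) (M : V → V → Prop) (hM : IsMatching G M) (γ : V → ℝ)
    (i j : V) (h : M i j) :
    reb G w r M γ i + reb G w r M γ j = w i j := by
  rw [reb_eq G w r M hM γ i j h, reb_eq G w r M hM γ j i (hM.symm _ _ h)]
  have h1 : r j i = 1 - r i j := by linarith [(hr i j (hM.subset _ _ h)).2.2]
  unfold surp
  rw [h1, hw.1 j i]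
  ring

theorem reb_outcome (G : SimpleGraph V) [DecidableRel G.Adj] (w r : V → V → ℝ)
    (hw : GoodW G w) (hr : GoodR G r) (M : V → V → Prop) (γ : V → ℝ)
    (h0 : IsOutcome G w M γ ∧ Stable G w M γ) :
    IsOutcome G w M (reb G w r M γ) := by
  have hM := h0.1.1
  refine ⟨hM, fun i => ?_, reb_sum G w r hw hr M hM γ, fun i h => reb_zero G w r M γ i h⟩
  by_cases h : ∃ j, M i j
  · obtain ⟨j, h⟩ := h
    exact (bestAlt_nonneg G w γ i j).trans (reb_ge G w r hw hr M γ h0 i j h)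
  · push Not at h
    rw [reb_zero G w r M γ i h]

theorem outcome_le_one (G : SimpleGraph V) (w : V → V → ℝ)
    (hw1 : ∀ i j, G.Adj i j → w i j ≤ 1) (M : V → V → Prop) (γ : V → ℝ)
    (h0 : IsOutcome G w M γ) (i : V) : γ i ≤ 1 := by
  obtain ⟨hM, hpos, hsum, hz⟩ := h0
  by_cases h : ∃ j, M i j
  · obtain ⟨j, h⟩ := h
    linarith [hsum i j h, hpos j, hw1 i j (hM.subset _ _ h)]
  · push Not at h
    rw [hz i h]; norm_num

theorem reb_ge' (G : SimpleGraph V) [DecidableRel G.Adj] (w r : V → V → ℝ)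
    (hw : GoodW G w) (hr : GoodR G r) (M : V → V → Prop) (γ : V → ℝ)
    (h0 : IsOutcome G w M γ ∧ Stable G w M γ) (i k : V) (hk : G.Adj i k) (hn : ¬ M i k) :
    w i k - γ k ≤ reb G w r M γ i := by
  by_cases h : ∃ j, M i j
  · obtain ⟨j, h⟩ := h
    refine le_trans (le_bestAlt G w γ i j k hk ?_) (reb_ge G w r hw hr M γ h0 i j h)
    rintro rfl
    exact hn h
  · push Not at h
    rw [reb_zero G w r M γ i h]
    have := h0.2 i k hk hn
    rw [h0.1.2.2.2 i h] at this
    linarith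

theorem step_stable (G : SimpleGraph V) [DecidableRel G.Adj] (w r : V → V → ℝ)
    (hw : GoodW G w) (hr : GoodR G r) (M : V → V → Prop) (γ : V → ℝ)
    (h0 : IsOutcome G w M γ ∧ Stable G w M γ) (κ : ℝ) (hκ : κ ∈ Set.Ioc (0 : ℝ) (1 / 2)) :
    IsOutcome G w M (fun i => κ * reb G w r M γ i + (1 - κ) * γ i) ∧
      Stable G w M (fun i => κ * reb G w r M γ i + (1 - κ) * γ i) := by
  have hR := reb_outcome G w r hw hr M γ h0
  have k0 := hκ.1
  have k1 := hκ.2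
  have k2 : 0 ≤ 1 - κ := by linarith
  refine ⟨⟨h0.1.1, fun i => ?_, fun i j h => ?_, fun i h => ?_⟩, fun i k hk hn => ?_⟩
  · have := mul_nonneg k0.le (hR.2.1 i)
    have := mul_nonneg k2 (h0.1.2.1 i)
    dsimp only
    linarith
  · have h1 := hR.2.2.1 i j h
    have h2 := h0.1.2.2.1 i j h
    dsimp only
    linear_combination κ * h1 + (1 - κ) * h2
  · simp [hR.2.2.2 i h, h0.1.2.2.2 i h]
  · have a1 := reb_ge' G w r hw hr M γ h0 i k hk hn
    have a2 := reb_ge' G w r hw hr M γ h0 k i hk.symm (fun h => hn (h0.1.1.symm _ _ h))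
    have a3 := h0.2 i k hk hn
    rw [hw.1 k i] at a2
    dsimp only
    nlinarith [mul_le_mul_of_nonneg_left a1 k0.le, mul_le_mul_of_nonneg_left a2 k0.le,
      mul_le_mul_of_nonneg_left a3 (by linarith : 0 ≤ 1 - 2 * κ)]

/-! Baillon-Bruck rate -/

/-- trigonometric kernel -/
noncomputable def ker (k : ℕ) (θ : ℝ) : ℝ :=
  ∑ j ∈ Finset.range k, (Real.cos (j * θ) + Real.cos ((j + 1 : ℕ) * θ))

theorem ker_rec (k : ℕ) (θ : ℝ) :
    ker (k + 2) θ + ker k θ = 2 * Real.cos θ * ker (k + 1) θ := by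
  induction k with
  | zero =>
    simp only [ker, Finset.sum_range_succ, Finset.sum_range_zero]
    have := Real.cos_two_mul θ
    norm_num
    rw [this]; ring
  | succ k ih =>
    have e1 : ker (k + 1 + 2) θ = ker (k + 2) θ +
      (Real.cos ((k + 2 : ℕ) * θ) + Real.cos ((k + 3 : ℕ) * θ)) := Finset.sum_range_succ _ _
    have e2 : ker (k + 2) θ = ker (k + 1) θ +
      (Real.cos ((k + 1 : ℕ) * θ) + Real.cos ((k + 2 : ℕ) * θ)) := Finset.sum_range_succ _ _
    have e3 : ker (k + 1) θ = ker k θ +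
      (Real.cos ((k : ℕ) * θ) + Real.cos ((k + 1 : ℕ) * θ)) := Finset.sum_range_succ _ _
    have c1 : Real.cos ((k + 2 : ℕ) * θ) + Real.cos ((k : ℕ) * θ) =
        2 * Real.cos θ * Real.cos ((k + 1 : ℕ) * θ) := by
      have h1 : ((k + 2 : ℕ) : ℝ) * θ = (k + 1 : ℕ) * θ + θ := by push_cast; ring
      have h2 : ((k : ℕ) : ℝ) * θ = (k + 1 : ℕ) * θ - θ := by push_cast; ring
      rw [h1, h2, Real.cos_add, Real.cos_sub]; ring
    have c2 : Real.cos ((k + 3 : ℕ) * θ) + Real.cos ((k + 1 : ℕ) * θ) =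
        2 * Real.cos θ * Real.cos ((k + 2 : ℕ) * θ) := by
      have h1 : ((k + 3 : ℕ) : ℝ) * θ = (k + 2 : ℕ) * θ + θ := by push_cast; ring
      have h2 : ((k + 1 : ℕ) : ℝ) * θ = (k + 2 : ℕ) * θ - θ := by push_cast; ring
      rw [h1, h2, Real.cos_add, Real.cos_sub]; ring
    have e4 : k + 1 + 1 = k + 2 := rfl
    rw [e4]
    linear_combination ih + e1 + e3 + c1 + c2 - 2 * Real.cos θ * e2

theorem ker_cont (k : ℕ) : Continuous (ker k) := by
  unfold ker
  fun_prop

theorem int_cos (j : ℕ) (hj : 0 < j) : ∫ θ in (0 : ℝ)..Real.pi, Real.cos (j * θ) = 0 := by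
  have : (j : ℝ) ≠ 0 := by positivity
  rw [intervalIntegral.integral_comp_mul_left (fun x => Real.cos x) this]
  simp [Real.sin_nat_mul_pi]

theorem int_ker (k : ℕ) : ∫ θ in (0 : ℝ)..Real.pi, ker (k + 1) θ = Real.pi := by
  have hi : ∀ j : ℕ, IntervalIntegrable (fun θ => Real.cos (j * θ)) MeasureTheory.volume
      0 Real.pi := fun j => (by fun_prop : Continuous _).intervalIntegrable _ _
  induction k with
  | zero =>
    have : ∀ θ, ker (0 + 1) θ = 1 + Real.cos ((1 : ℕ) * θ) := by intro θ; simp [ker]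
    simp_rw [this]
    rw [intervalIntegral.integral_add (by simp) (hi 1), int_cos 1 one_pos]
    simp
  | succ k ih =>
    have : ∀ θ, ker (k + 1 + 1) θ = ker (k + 1) θ +
      (Real.cos ((k + 1 : ℕ) * θ) + Real.cos ((k + 2 : ℕ) * θ)) :=
      fun θ => Finset.sum_range_succ _ _
    simp_rw [this]
    rw [intervalIntegral.integral_add ((ker_cont _).intervalIntegrable _ _)
      ((hi _).add (hi _)), intervalIntegral.integral_add (hi _) (hi _), ih,
      int_cos _ (by omega), int_cos _ (by omega)]
    simp

/-- survival probabilities -/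
noncomputable def surv (q : ℝ) (n k : ℕ) : ℝ :=
  (∫ θ in (0 : ℝ)..Real.pi, ker k θ * (1 - 2 * q + 2 * q * Real.cos θ) ^ n) / Real.pi

theorem surv_zero_right (q : ℝ) (n : ℕ) : surv q n 0 = 0 := by
  simp [surv, ker]

theorem surv_zero_left (q : ℝ) (k : ℕ) : surv q 0 (k + 1) = 1 := by
  simp [surv, int_ker, Real.pi_ne_zero]

theorem surv_rec (q : ℝ) (n k : ℕ) :
    surv q (n + 1) (k + 1) =
      q * surv q n (k + 2) + (1 - 2 * q) * surv q n (k + 1) + q * surv q n k := by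
  have hi : ∀ k, IntervalIntegrable
      (fun θ => ker k θ * (1 - 2 * q + 2 * q * Real.cos θ) ^ n) MeasureTheory.volume 0 Real.pi :=
    fun k => ((ker_cont k).mul (by fun_prop)).intervalIntegrable _ _
  have key : (∫ θ in (0 : ℝ)..Real.pi, ker (k + 1) θ * (1 - 2 * q + 2 * q * Real.cos θ) ^ (n + 1))
      = q * (∫ θ in (0 : ℝ)..Real.pi, ker (k + 2) θ * (1 - 2 * q + 2 * q * Real.cos θ) ^ n)
      + (1 - 2 * q) * (∫ θ in (0 : ℝ)..Real.pi, ker (k + 1) θ * (1 - 2 * q + 2 * q * Real.cos θ) ^ n)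
      + q * (∫ θ in (0 : ℝ)..Real.pi, ker k θ * (1 - 2 * q + 2 * q * Real.cos θ) ^ n) := by
    rw [← intervalIntegral.integral_const_mul, ← intervalIntegral.integral_const_mul,
      ← intervalIntegral.integral_const_mul, ← intervalIntegral.integral_add
        ((hi _).const_mul _) ((hi _).const_mul _), ← intervalIntegral.integral_add
        (((hi _).const_mul _).add ((hi _).const_mul _)) ((hi _).const_mul _)]
    congr 1
    funext θ
    have := ker_rec k θ
    rw [pow_succ]
    linear_combination (-q * (1 - 2 * q + 2 * q * Real.cos θ) ^ n) * this
  unfold surv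
  rw [key]
  ring

theorem gauss_bound (b : ℝ) (hb : 0 < b) :
    ∫ t in (0 : ℝ)..1, Real.exp (-b * t ^ 2) ≤ Real.sqrt (Real.pi / b) / 2 := by
  rw [← integral_gaussian_Ioi, intervalIntegral.integral_of_le zero_le_one]
  refine MeasureTheory.setIntegral_mono_set (integrable_exp_neg_mul_sq hb).integrableOn ?_ ?_
  · exact Filter.Eventually.of_forall fun _ => (Real.exp_pos _).le
  · exact (Set.Ioc_subset_Ioi_self).eventuallyLE

theorem surv_bound (q : ℝ) (hq : 0 < q) (hq4 : q ≤ 1 / 4) (n : ℕ) (hn : 0 < n) :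
    surv q n 1 ≤ 1 / Real.sqrt (Real.pi * q * n) := by
  have hn' : (0 : ℝ) < n := by exact_mod_cast hn
  have hb : 0 < 4 * q * n := by positivity
  have h1 : (∫ θ in (0 : ℝ)..Real.pi, ker 1 θ * (1 - 2 * q + 2 * q * Real.cos θ) ^ n) ≤
      ∫ θ in (0 : ℝ)..Real.pi, 4 * (Real.exp (-(4 * q * n) * (Real.sin (θ / 2)) ^ 2) *
        (Real.cos (θ / 2) * (1 / 2))) := by
    refine intervalIntegral.integral_mono_on Real.pi_pos.le
      (((ker_cont 1).mul (by fun_prop)).intervalIntegrable _ _)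
      ((by fun_prop : Continuous _).intervalIntegrable _ _) fun θ hθ => ?_
    have hc : Real.cos θ = 2 * Real.cos (θ / 2) ^ 2 - 1 := by
      rw [← Real.cos_two_mul]; congr 1; ring
    have hs : Real.sin (θ / 2) ^ 2 = 1 - Real.cos (θ / 2) ^ 2 := by
      linarith [Real.sin_sq_add_cos_sq (θ / 2)]
    have hc0 : 0 ≤ Real.cos (θ / 2) :=
      Real.cos_nonneg_of_mem_Icc ⟨by linarith [hθ.1, Real.pi_pos], by linarith [hθ.2]⟩
    have hc1 : Real.cos (θ / 2) ≤ 1 := Real.cos_le_one _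
    have hk : ker 1 θ = 2 * Real.cos (θ / 2) ^ 2 := by
      simp only [ker, Finset.sum_range_one]
      norm_num
      linarith
    have hl : 1 - 2 * q + 2 * q * Real.cos θ = 1 - 4 * q * Real.sin (θ / 2) ^ 2 := by
      rw [hc, hs]; ring
    have hl0 : 0 ≤ 1 - 4 * q * Real.sin (θ / 2) ^ 2 := by
      nlinarith [Real.sin_sq_le_one (θ / 2), sq_nonneg (Real.sin (θ / 2))]
    have hp : (1 - 4 * q * Real.sin (θ / 2) ^ 2) ^ n ≤
        Real.exp (-(4 * q * n) * (Real.sin (θ / 2)) ^ 2) := by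
      have := pow_le_pow_left₀ hl0 (by
        linarith [Real.add_one_le_exp (-(4 * q * Real.sin (θ / 2) ^ 2))] :
        1 - 4 * q * Real.sin (θ / 2) ^ 2 ≤ Real.exp (-(4 * q * Real.sin (θ / 2) ^ 2))) n
      refine this.trans (le_of_eq ?_)
      rw [← Real.exp_nat_mul]
      congr 1; ring
    rw [hk, hl]
    have h2 : 2 * Real.cos (θ / 2) ^ 2 ≤ 2 * Real.cos (θ / 2) := by nlinarith
    calc _ ≤ 2 * Real.cos (θ / 2) * Real.exp (-(4 * q * n) * (Real.sin (θ / 2)) ^ 2) :=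
          mul_le_mul h2 hp (pow_nonneg hl0 _) (by linarith)
      _ = _ := by ring
  have h2 : (∫ θ in (0 : ℝ)..Real.pi, 4 * (Real.exp (-(4 * q * n) * (Real.sin (θ / 2)) ^ 2) *
        (Real.cos (θ / 2) * (1 / 2)))) = 4 * ∫ t in (0 : ℝ)..1, Real.exp (-(4 * q * n) * t ^ 2) := by
    rw [intervalIntegral.integral_const_mul]
    congr 1
    have := intervalIntegral.integral_comp_mul_deriv (a := 0) (b := Real.pi)
      (f := fun θ => Real.sin (θ / 2)) (f' := fun θ => Real.cos (θ / 2) * (1 / 2))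
      (g := fun t => Real.exp (-(4 * q * n) * t ^ 2))
      (fun θ _ => ((hasDerivAt_id θ).div_const 2).sin) (by fun_prop) (by fun_prop)
    simpa using this
  have h3 := gauss_bound _ hb
  have h4 : Real.sqrt (Real.pi / (4 * q * n)) = Real.pi / (2 * Real.sqrt (Real.pi * q * n)) := by
    rw [show Real.pi / (4 * q * n) = Real.pi ^ 2 / (2 ^ 2 * (Real.pi * q * n)) by
      field_simp; norm_num, Real.sqrt_div (by positivity), Real.sqrt_mul (by positivity),
      Real.sqrt_sq Real.pi_pos.le, Real.sqrt_sq (by norm_num)]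
  unfold surv
  rw [div_le_iff₀ Real.pi_pos]
  have : 1 / Real.sqrt (Real.pi * q * n) * Real.pi =
      4 * (Real.pi / (2 * Real.sqrt (Real.pi * q * n)) / 2) := by
    field_simp
    norm_num
  rw [this, ← h4]
  linarith

/-- binomial averages -/
noncomputable def avg (p : ℝ) : ℕ → ℕ → ℕ → ℝ
  | 0, n, k => surv (p * (1 - p)) n k
  | g + 1, n, k => (1 - p) * avg p g n k + p * avg p g n (k + 1)

theorem avg_zero (p : ℝ) (g k : ℕ) : avg p g 0 (k + 1) = 1 := by
  induction g generalizing k with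
  | zero => simp [avg, surv_zero_left]
  | succ g ih => simp only [avg, ih]; ring

theorem avg_rec (p : ℝ) (g n k : ℕ) :
    avg p g (n + 1) (k + 1) = (1 - p) * avg p (g + 1) n (k + 1) + p * avg p (g + 1) n k := by
  induction g generalizing k with
  | zero =>
    simp only [avg, surv_rec]; ring
  | succ g ih =>
    rw [avg, ih, ih, avg.eq_2 p n (k + 1) (g + 1), avg.eq_2 p n k (g + 1)]; ring

theorem km_aux {E : Type*} [NormedAddCommGroup E] [NormedSpace ℝ E] (T : E → E)
    (hT : ∀ x y, ‖T x - T y‖ ≤ ‖x - y‖) (p : ℝ) (hp0 : 0 ≤ p) (hp1 : p ≤ 1)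
    (x : ℕ → E) (hx : ∀ n, x (n + 1) = p • T (x n) + (1 - p) • x n)
    (hb : ∀ n, ‖T (x n) - x 0‖ ≤ 1) (n : ℕ) :
    ∀ g, ‖T (x (n + g)) - x n‖ ≤ avg p g n 1 ∧ ‖x (n + g) - x n‖ ≤ avg p g n 0 := by
  have hq0 : 0 ≤ 1 - p := by linarith
  have conv : ∀ a b : E, ‖(1 - p) • a + p • b‖ ≤ (1 - p) * ‖a‖ + p * ‖b‖ := by
    intro a b
    refine (norm_add_le _ _).trans (le_of_eq ?_)
    rw [norm_smul, norm_smul, Real.norm_of_nonneg hp0, Real.norm_of_nonneg hq0]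
  have hD : ∀ n, (∀ g, ‖T (x (n + g)) - x n‖ ≤ avg p g n 1) →
      ∀ g, ‖x (n + g) - x n‖ ≤ avg p g n 0 := by
    intro n hB g
    induction g with
    | zero => simp [avg, surv_zero_right]
    | succ g ih =>
      have e : x (n + (g + 1)) - x n = (1 - p) • (x (n + g) - x n) + p • (T (x (n + g)) - x n) := by
        rw [← add_assoc, hx]; module
      rw [e, avg]
      exact (conv _ _).trans (add_le_add (mul_le_mul_of_nonneg_left ih hq0)
        (mul_le_mul_of_nonneg_left (hB g) hp0))
  have hB : ∀ g, ‖T (x (n + g)) - x n‖ ≤ avg p g n 1 := by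
    induction n with
    | zero => intro g; rw [avg_zero]; exact hb _
    | succ n ih =>
      intro g
      have e : T (x (n + 1 + g)) - x (n + 1) = (1 - p) • (T (x (n + (g + 1))) - x n) +
          p • (T (x (n + (g + 1))) - T (x n)) := by
        rw [hx, show n + 1 + g = n + (g + 1) by ring]; module
      rw [e, avg_rec]
      exact (conv _ _).trans (add_le_add (mul_le_mul_of_nonneg_left (ih _) hq0)
        (mul_le_mul_of_nonneg_left ((hT _ _).trans (hD n ih _)) hp0))
  exact fun g => ⟨hB g, hD n hB g⟩

theorem km_rate {E : Type*} [NormedAddCommGroup E] [NormedSpace ℝ E] (T : E → E)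
    (hT : ∀ x y, ‖T x - T y‖ ≤ ‖x - y‖) (p : ℝ) (hp0 : 0 < p) (hp1 : p < 1)
    (x : ℕ → E) (hx : ∀ n, x (n + 1) = p • T (x n) + (1 - p) • x n)
    (hb : ∀ n, ‖T (x n) - x 0‖ ≤ 1) (n : ℕ) (hn : 0 < n) :
    ‖T (x n) - x n‖ ≤ 1 / Real.sqrt (Real.pi * (p * (1 - p)) * n) := by
  have := (km_aux T hT p hp0.le hp1.le x hx hb n 0).1
  exact this.trans (surv_bound _ (mul_pos hp0 (by linarith)) (by nlinarith [sq_nonneg (p - 1 / 2)])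
    n hn)

/-- With weights in `(0,1]`, starting Edge Rebalancing from a
stable trade outcome, within `⌈1/(π κ(1−κ) ε²)⌉` iterations some iterate moves by at
most `ε` under rebalancing, and at such a time the outcome satisfies `ε`-correct
division. -/
theorem edge_rebalancing_converges
    {V : Type*} [Fintype V] [DecidableEq V] (G : SimpleGraph V) [DecidableRel G.Adj]
    (w : V → V → ℝ) (hw : GoodW G w) (hw1 : ∀ i j, G.Adj i j → w i j ≤ 1)
    (r : V → V → ℝ) (hr : GoodR G r)
    (M : V → V → Prop) (γ0 : V → ℝ)
    (h0 : IsOutcome G w M γ0 ∧ Stable G w M γ0)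
    (κ : ℝ) (hκ : κ ∈ Set.Ioc (0 : ℝ) (1 / 2)) (ε : ℝ) (hε : 0 < ε) :
    ∃ t : ℕ, t ≤ ⌈1 / (Real.pi * κ * (1 - κ) * ε ^ 2)⌉₊ ∧
      (∀ i, |reb G w r M (rebIter G w r M κ γ0 t) i - rebIter G w r M κ γ0 t i| ≤ ε) ∧
      ∀ i j, M i j →
        |rebIter G w r M κ γ0 t i - bestAlt G w (rebIter G w r M κ γ0 t) i j -
          r i j * surp G w (rebIter G w r M κ γ0 t) i j| ≤ ε := by
  have hM := h0.1.1
  have k0 := hκ.1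
  have k1 := hκ.2
  have hst : ∀ t, IsOutcome G w M (rebIter G w r M κ γ0 t) ∧
      Stable G w M (rebIter G w r M κ γ0 t) := by
    intro t
    induction t with
    | zero => exact h0
    | succ t ih => exact step_stable G w r hw hr M _ ih κ hκ
  have hb : ∀ t, ‖reb G w r M (rebIter G w r M κ γ0 t) - rebIter G w r M κ γ0 0‖ ≤ 1 := by
    intro t
    refine (pi_norm_le_iff_of_nonneg zero_le_one).2 fun i => ?_
    have hR := reb_outcome G w r hw hr M _ (hst t)
    have a1 := hR.2.1 i
    have a2 := outcome_le_one G w hw1 M _ hR i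
    have a3 := (hst 0).1.2.1 i
    have a4 := outcome_le_one G w hw1 M _ (hst 0).1 i
    rw [Real.norm_eq_abs, Pi.sub_apply, abs_le]
    constructor <;> linarith
  have hc : 0 < Real.pi * κ * (1 - κ) * ε ^ 2 := by
    have := Real.pi_pos
    have : 0 < 1 - κ := by linarith
    positivity
  set n := ⌈1 / (Real.pi * κ * (1 - κ) * ε ^ 2)⌉₊ with hn
  have hn0 : 0 < n := Nat.ceil_pos.2 (by positivity)
  have hnle : 1 / (Real.pi * κ * (1 - κ) * ε ^ 2) ≤ n := Nat.le_ceil _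
  have hrate := km_rate (reb G w r M) (reb_nonexp G w r hr M hM) κ k0 (by linarith)
    (rebIter G w r M κ γ0) (fun t => by funext i; simp [rebIter]) hb n hn0
  have hfin : 1 / Real.sqrt (Real.pi * (κ * (1 - κ)) * n) ≤ ε := by
    rw [div_le_iff₀ hc] at hnle
    have h1 : 1 ≤ ε * Real.sqrt (Real.pi * (κ * (1 - κ)) * n) := by
      rw [← Real.sqrt_sq hε.le, ← Real.sqrt_mul (sq_nonneg _), Real.one_le_sqrt]
      linarith
    have h2 : 0 < Real.sqrt (Real.pi * (κ * (1 - κ)) * n) := by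
      by_contra h
      nlinarith
    rw [div_le_iff₀ h2]
    exact h1
  have hmain : ∀ i, |reb G w r M (rebIter G w r M κ γ0 n) i - rebIter G w r M κ γ0 n i| ≤ ε := by
    intro i
    have := norm_le_pi_norm (reb G w r M (rebIter G w r M κ γ0 n) - rebIter G w r M κ γ0 n) i
    rw [Real.norm_eq_abs, Pi.sub_apply] at this
    exact this.trans (hrate.trans hfin)
  refine ⟨n, le_refl _, hmain, fun i j h => ?_⟩
  have := hmain i
  rw [reb_eq G w r M hM _ i j h, abs_sub_comm, ← sub_sub] at this
  exact this
end EN
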